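/- Let G be a cubic graph (every vertex has degree three) and let H be the corresponding auxiliary graph. If H has a good coloured orientation, then G has a two-coloured perfect matching. -/

import Mathlib

/-- A two-coloured perfect matching of `G`: a two-colouring (black/white, modelled by
`Bool`) of the vertices in which every vertex has exactly one neighbour of the same
colour. -/
def IsTCPM {V : Type*} (G : SimpleGraph V) (c : V → Bool) : Prop :=
  ∀ v, ∃! w, G.Adj v w ∧ c w = c v

/-- `v` has degree three in `H`: it has exactly three distinct neighbours. -/
def HasDeg3 {W : Type*} (H : SimpleGraph W) (v : W) : Prop :=
  ∃ w₁ w₂ w₃, w₁ ≠ w₂ ∧ w₁ ≠ w₃ ∧ w₂ ≠ w₃ ∧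
    H.Adj v w₁ ∧ H.Adj v w₂ ∧ H.Adj v w₃ ∧
    ∀ w, H.Adj v w → w = w₁ ∨ w = w₂ ∨ w = w₃

/-- The potential vertices of the auxiliary graph `H` obtained from a graph `G`:
for every vertex `x` of `G` a vertex `orig x`, and for every edge `uv` of `G` the six
new vertices of the gadget replacing `uv`.  Here `dvert u v` denotes the gadget
neighbour of `u` on the edge `uv` (so `dvert u v` is the vertex `d` and `dvert v u`
is the vertex `o` of the gadget), while the vertices `i`, `j`, `in`, `out` of the
gadget on an edge `e` are `ivert e`, `jvert e`, `invert e`, `outvert e`. -/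
inductive AuxV (V : Type*)
| orig (x : V)
| dvert (x y : V)
| ivert (e : Sym2 V)
| jvert (e : Sym2 V)
| invert (e : Sym2 V)
| outvert (e : Sym2 V)

/-- The actual vertices of the auxiliary graph among the potential ones. -/
def AuxOk {V : Type*} (G : SimpleGraph V) : AuxV V → Prop
| .orig _ => True
| .dvert x y => G.Adj x y
| .ivert e => e ∈ G.edgeSet
| .jvert e => e ∈ G.edgeSet
| .invert e => e ∈ G.edgeSet
| .outvert e => e ∈ G.edgeSet

/-- The adjacency generating relation of the auxiliary graph: for each edge `uv` of
`G`, the gadget edges `u d`, `d i`, `d j`, `i o`, `j o`, `o v`, `i in`, `j out`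
(with `d = dvert u v` and `o = dvert v u`). -/
def AuxAdj {V : Type*} (G : SimpleGraph V) : AuxV V → AuxV V → Prop := fun a b =>
  (∃ x y, G.Adj x y ∧ a = .orig x ∧ b = .dvert x y) ∨
  (∃ x y, G.Adj x y ∧ a = .dvert x y ∧ b = .ivert s(x, y)) ∨
  (∃ x y, G.Adj x y ∧ a = .dvert x y ∧ b = .jvert s(x, y)) ∨
  (∃ e, e ∈ G.edgeSet ∧ a = .ivert e ∧ b = .invert e) ∨
  (∃ e, e ∈ G.edgeSet ∧ a = .jvert e ∧ b = .outvert e)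

/-- The vertex set of the auxiliary graph of `G`. -/
def AuxVert {V : Type*} (G : SimpleGraph V) : Type _ := {z : AuxV V // AuxOk G z}

/-- The auxiliary graph `H` of `G`. -/
def AuxGraph {V : Type*} (G : SimpleGraph V) : SimpleGraph (AuxVert G) :=
  SimpleGraph.fromRel (fun a b => AuxAdj G a.1 b.1)

/-- The outvertices of the auxiliary graph. -/
def IsOutV {V : Type*} (G : SimpleGraph V) (z : AuxVert G) : Prop :=
  ∃ e, z.1 = AuxV.outvert e

/-- `(col, orient)` is a coloured orientation of the graph `H` (with distinguished
outvertices given by `isOut`): a two-colouring `col` of the vertices together with an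
orientation `orient` of a subset of the edges (`orient x y` meaning that the edge `xy`
is oriented from `x` to `y`) such that: every vertex is adjacent to at most one vertex
of the opposite colour; an edge is oriented (in exactly one direction) if and only if
it is monochromatic; every vertex other than the outvertices has outdegree at most two
and indegree at most one; and every outvertex has indegree zero. -/
def IsColOrient {W : Type*} (H : SimpleGraph W) (isOut : W → Prop)
    (col : W → Bool) (orient : W → W → Prop) : Prop :=
  (∀ x y, orient x y → H.Adj x y) ∧
  (∀ x y, orient x y → ¬ orient y x) ∧
  (∀ x y, H.Adj x y → ((orient x y ∨ orient y x) ↔ col x = col y)) ∧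
  (∀ v w₁ w₂, H.Adj v w₁ → H.Adj v w₂ → col w₁ ≠ col v → col w₂ ≠ col v → w₁ = w₂) ∧
  (∀ v, ¬ isOut v → ∀ w₁ w₂ w₃, orient v w₁ → orient v w₂ → orient v w₃ →
    w₁ = w₂ ∨ w₁ = w₃ ∨ w₂ = w₃) ∧
  (∀ v, ¬ isOut v → ∀ w₁ w₂, orient w₁ v → orient w₂ v → w₁ = w₂) ∧
  (∀ v, isOut v → ∀ w, ¬ orient w v)

/-- A coloured orientation is good if every vertex of degree three is adjacent to
exactly one vertex of the opposite colour and has indegree exactly one and outdegree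
exactly one. -/
def IsGoodColOrient {W : Type*} (H : SimpleGraph W) (isOut : W → Prop)
    (col : W → Bool) (orient : W → W → Prop) : Prop :=
  IsColOrient H isOut col orient ∧
  ∀ v, HasDeg3 H v →
    (∃! w, H.Adj v w ∧ col w ≠ col v) ∧
    (∃! w, orient w v) ∧
    (∃! w, orient v w)

/-!
Restrict the colouring of `H` to the vertices of `G`. In the gadget of an edge `uv`, the vertices
`d, i, o, j` form a 4-cycle. Since no vertex has two neighbours of the opposite colour while `d` has
one among `u, i, j`, the edge `ud` is dichromatic exactly when `d` and `o` have the same colour, and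
by symmetry so is `vo`. With only two colours, `ud` is therefore dichromatic exactly when `u` and
`v` have the same colour, so the unique neighbour of `u` in `H` of the opposite colour points along
the unique edge of `G` to a neighbour of the same colour.
-/

section FourCycle

variable {W α : Type*} {H : SimpleGraph W} {c : W → α}

/-- The dichromatic edges of `H` under the colouring `c` form a (not necessarily perfect) matching:
every vertex has at most one neighbour of a different colour. -/
def DichromaticIsMatching (H : SimpleGraph W) (c : W → α) : Prop :=
  ∀ v w₁ w₂, H.Adj v w₁ → H.Adj v w₂ → c w₁ ≠ c v → c w₂ ≠ c v → w₁ = w₂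

namespace DichromaticIsMatching

variable {d o i j u : W}

theorem eq_of_adj_of_ne (hc : DichromaticIsMatching H c) {v w₁ w₂ : W} (h₁ : H.Adj v w₁)
    (h₂ : H.Adj v w₂) (hne : w₁ ≠ w₂) (hw₁ : c w₁ ≠ c v) : c w₂ = c v :=
  by_contra fun hw₂ => hne (hc v w₁ w₂ h₁ h₂ hw₁ hw₂)

theorem antipode_eq_of_external_ne (hc : DichromaticIsMatching H c)
    (hdu : H.Adj d u) (hdi : H.Adj d i) (hdj : H.Adj d j) (hoi : H.Adj o i) (hoj : H.Adj o j)
    (hui : u ≠ i) (huj : u ≠ j) (hij : i ≠ j) (hu : c u ≠ c d) : c o = c d := by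
  have hi : c i = c d := hc.eq_of_adj_of_ne hdu hdi hui hu
  have hj : c j = c d := hc.eq_of_adj_of_ne hdu hdj huj hu
  by_contra ho
  have hio : c i ≠ c o := hi.trans_ne (Ne.symm ho)
  exact ho ((hc.eq_of_adj_of_ne hoi hoj hij hio).symm.trans hj)

theorem eq_of_antipode_eq (hc : DichromaticIsMatching H c)
    (hdi : H.Adj d i) (hoi : H.Adj o i) (hdo : d ≠ o) (ho : c o = c d) : c i = c d := by
  by_contra hi
  exact hi ((hc.eq_of_adj_of_ne hdi.symm hoi.symm hdo (Ne.symm hi)).symm.trans ho)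

theorem external_ne_iff_antipode_eq (hc : DichromaticIsMatching H c)
    (hdu : H.Adj d u) (hdi : H.Adj d i) (hdj : H.Adj d j) (hoi : H.Adj o i) (hoj : H.Adj o j)
    (hui : u ≠ i) (huj : u ≠ j) (hij : i ≠ j) (hdo : d ≠ o)
    (hd : c u ≠ c d ∨ c i ≠ c d ∨ c j ≠ c d) : c u ≠ c d ↔ c o = c d := by
  refine ⟨hc.antipode_eq_of_external_ne hdu hdi hdj hoi hoj hui huj hij, fun ho => ?_⟩
  rcases hd with hu | hi | hj
  · exact hu
  · exact absurd (hc.eq_of_antipode_eq hdi hoi hdo ho) hi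
  · exact absurd (hc.eq_of_antipode_eq hdj hoj hdo ho) hj

end DichromaticIsMatching

end FourCycle

section ColouredOrientation

variable {W : Type*} {H : SimpleGraph W} {isOut : W → Prop} {col : W → Bool}
  {orient : W → W → Prop}

theorem IsColOrient.dichromaticIsMatching (hco : IsColOrient H isOut col orient) :
    DichromaticIsMatching H col :=
  hco.2.2.2.1

theorem IsGoodColOrient.exists_adj_ne (hco : IsGoodColOrient H isOut col orient) {v : W}
    (hv : HasDeg3 H v) : ∃ w, H.Adj v w ∧ col w ≠ col v :=
  (hco.2 v hv).1.exists

end ColouredOrientation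

section AuxiliaryGraph

variable {V : Type*} {G : SimpleGraph V} {x y z : V}

namespace AuxVert

/-- The vertex of the auxiliary graph coming from the vertex `x` of `G`. -/
def orig (G : SimpleGraph V) (x : V) : AuxVert G := ⟨.orig x, trivial⟩

/-- The neighbour of `x` in the gadget of the edge `xy`: the gadget vertex `d` of the edge directed
from `x` to `y`. The gadget vertex `o` is obtained from the reversed adjacency. -/
def dvert (h : G.Adj x y) : AuxVert G := ⟨.dvert x y, h⟩

/-- The gadget vertex `i` of the edge `xy`. -/
def ivert (h : G.Adj x y) : AuxVert G := ⟨.ivert s(x, y), h⟩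

/-- The gadget vertex `j` of the edge `xy`. -/
def jvert (h : G.Adj x y) : AuxVert G := ⟨.jvert s(x, y), h⟩

@[simp]
theorem val_orig : (orig G x).1 = .orig x := rfl

@[simp]
theorem val_dvert (h : G.Adj x y) : (dvert h).1 = .dvert x y := rfl

@[simp]
theorem val_ivert (h : G.Adj x y) : (ivert h).1 = .ivert s(x, y) := rfl

@[simp]
theorem val_jvert (h : G.Adj x y) : (jvert h).1 = .jvert s(x, y) := rfl

theorem ext_iff {a b : AuxVert G} : a = b ↔ a.1 = b.1 := Subtype.ext_iff

theorem ivert_symm (h : G.Adj x y) : ivert h.symm = ivert h :=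
  Subtype.ext (congrArg AuxV.ivert Sym2.eq_swap)

theorem jvert_symm (h : G.Adj x y) : jvert h.symm = jvert h :=
  Subtype.ext (congrArg AuxV.jvert Sym2.eq_swap)

theorem orig_ne_ivert (h : G.Adj x y) : orig G z ≠ ivert h := nofun

theorem orig_ne_jvert (h : G.Adj x y) : orig G z ≠ jvert h := nofun

theorem ivert_ne_jvert (h : G.Adj x y) : ivert h ≠ jvert h := nofun

theorem dvert_inj {h : G.Adj x y} {h' : G.Adj x z} : dvert h = dvert h' ↔ y = z := by
  simp [AuxVert.ext_iff]

theorem dvert_ne_dvert_symm (h : G.Adj x y) : dvert h ≠ dvert h.symm := fun heq =>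
  h.ne (AuxV.dvert.inj (congrArg Subtype.val heq)).1

end AuxVert

namespace AuxGraph

open AuxVert

theorem adj_iff {a b : AuxVert G} :
    (AuxGraph G).Adj a b ↔ AuxAdj G a.1 b.1 ∨ AuxAdj G b.1 a.1 := by
  refine (SimpleGraph.fromRel_adj _ a b).trans (and_iff_right_of_imp ?_)
  rintro hab rfl
  obtain ⟨_ | _ | _ | _ | _ | _, _⟩ := a <;> simp [AuxAdj] at hab

theorem adj_orig_iff {w : AuxVert G} :
    (AuxGraph G).Adj (orig G x) w ↔ ∃ y, ∃ h : G.Adj x y, w = dvert h := by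
  simp [adj_iff, AuxAdj, AuxVert.ext_iff]

theorem adj_dvert_iff (h : G.Adj x y) {w : AuxVert G} :
    (AuxGraph G).Adj (dvert h) w ↔ w = orig G x ∨ w = ivert h ∨ w = jvert h := by
  rw [SimpleGraph.adj_comm, adj_iff]
  simp [AuxAdj, AuxVert.ext_iff, h]

theorem adj_orig_dvert (h : G.Adj x y) : (AuxGraph G).Adj (orig G x) (dvert h) :=
  adj_orig_iff.2 ⟨y, h, rfl⟩

theorem adj_dvert_ivert (h : G.Adj x y) : (AuxGraph G).Adj (dvert h) (ivert h) :=
  (adj_dvert_iff h).2 (.inr (.inl rfl))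

theorem adj_dvert_jvert (h : G.Adj x y) : (AuxGraph G).Adj (dvert h) (jvert h) :=
  (adj_dvert_iff h).2 (.inr (.inr rfl))

theorem adj_dvert_symm_ivert (h : G.Adj x y) : (AuxGraph G).Adj (dvert h.symm) (ivert h) :=
  ivert_symm h ▸ adj_dvert_ivert h.symm

theorem adj_dvert_symm_jvert (h : G.Adj x y) : (AuxGraph G).Adj (dvert h.symm) (jvert h) :=
  jvert_symm h ▸ adj_dvert_jvert h.symm

theorem hasDeg3_dvert (h : G.Adj x y) : HasDeg3 (AuxGraph G) (dvert h) :=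
  ⟨orig G x, ivert h, jvert h, orig_ne_ivert h, orig_ne_jvert h, ivert_ne_jvert h,
    (adj_orig_dvert h).symm, adj_dvert_ivert h, adj_dvert_jvert h,
    fun _ => (adj_dvert_iff h).1⟩

theorem hasDeg3_orig (hx : HasDeg3 G x) : HasDeg3 (AuxGraph G) (orig G x) := by
  obtain ⟨y₁, y₂, y₃, h₁₂, h₁₃, h₂₃, h₁, h₂, h₃, hall⟩ := hx
  refine ⟨dvert h₁, dvert h₂, dvert h₃, mt dvert_inj.1 h₁₂, mt dvert_inj.1 h₁₃,
    mt dvert_inj.1 h₂₃, adj_orig_dvert h₁, adj_orig_dvert h₂, adj_orig_dvert h₃, fun w hw => ?_⟩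
  obtain ⟨y, h, rfl⟩ := adj_orig_iff.1 hw
  simpa only [dvert_inj] using hall y h

theorem orig_ne_dvert_iff_dvert_symm_eq {α : Type*} {c : AuxVert G → α}
    (hc : DichromaticIsMatching (AuxGraph G) c) (h : G.Adj x y)
    (hd : ∃ w, (AuxGraph G).Adj (dvert h) w ∧ c w ≠ c (dvert h)) :
    c (orig G x) ≠ c (dvert h) ↔ c (dvert h.symm) = c (dvert h) := by
  refine hc.external_ne_iff_antipode_eq (adj_orig_dvert h).symm (adj_dvert_ivert h)
    (adj_dvert_jvert h) (adj_dvert_symm_ivert h) (adj_dvert_symm_jvert h) (orig_ne_ivert h)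
    (orig_ne_jvert h) (ivert_ne_jvert h) (dvert_ne_dvert_symm h) ?_
  simpa only [adj_dvert_iff, or_and_right, exists_or, exists_eq_left] using hd

theorem dvert_ne_orig_iff_orig_eq_orig {c : AuxVert G → Bool}
    (hc : DichromaticIsMatching (AuxGraph G) c)
    (h : G.Adj x y) (hd : ∃ w, (AuxGraph G).Adj (dvert h) w ∧ c w ≠ c (dvert h))
    (ho : ∃ w, (AuxGraph G).Adj (dvert h.symm) w ∧ c w ≠ c (dvert h.symm)) :
    c (dvert h) ≠ c (orig G x) ↔ c (orig G y) = c (orig G x) := by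
  have hx : c (orig G x) ≠ c (dvert h) ↔ c (dvert h.symm) = c (dvert h) :=
    orig_ne_dvert_iff_dvert_symm_eq hc h hd
  have hy : c (orig G y) ≠ c (dvert h.symm) ↔ c (dvert h) = c (dvert h.symm) :=
    orig_ne_dvert_iff_dvert_symm_eq hc h.symm ho
  by_cases hod : c (dvert h.symm) = c (dvert h)
  · refine iff_of_true (hx.2 hod).symm ?_
    rw [Bool.eq_not.2 (hx.2 hod), Bool.eq_not.2 (hy.2 hod.symm), hod]
  · have hu : c (orig G x) = c (dvert h) := not_ne_iff.1 (mt hx.1 hod)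
    have hv : c (orig G y) = c (dvert h.symm) := not_ne_iff.1 (mt hy.1 (Ne.symm hod))
    exact iff_of_false (not_ne_iff.2 hu.symm) (hv ▸ hu ▸ hod)

end AuxGraph

end AuxiliaryGraph

open AuxVert AuxGraph in
theorem stmt_16_general {V : Type*} (G : SimpleGraph V) (col : AuxVert G → Bool)
    (hcol : DichromaticIsMatching (AuxGraph G) col)
    (horig : ∀ x, ∃ w, (AuxGraph G).Adj (orig G x) w ∧ col w ≠ col (orig G x))
    (hdvert : ∀ {x y : V} (h : G.Adj x y),
      ∃ w, (AuxGraph G).Adj (dvert h) w ∧ col w ≠ col (dvert h)) :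
    IsTCPM G fun x => col (orig G x) := by
  have hkey {x y : V} (h : G.Adj x y) :
      col (dvert h) ≠ col (orig G x) ↔ col (orig G y) = col (orig G x) :=
    dvert_ne_orig_iff_orig_eq_orig hcol h (hdvert h) (hdvert h.symm)
  intro x
  obtain ⟨w, hw, hne⟩ := horig x
  obtain ⟨y, hxy, rfl⟩ := adj_orig_iff.1 hw
  refine ⟨y, ⟨hxy, (hkey hxy).1 hne⟩, ?_⟩
  rintro z ⟨hxz, hz⟩
  exact dvert_inj.1 (hcol _ _ _ (adj_orig_dvert hxz) hw ((hkey hxz).2 hz) hne)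

/-- If the auxiliary graph `H` of a cubic graph `G` has a good coloured orientation,
then `G` has a two-coloured perfect matching. -/
theorem stmt_16 {V : Type*} (G : SimpleGraph V) (hcubic : ∀ v, HasDeg3 G v)
    (col : AuxVert G → Bool) (orient : AuxVert G → AuxVert G → Prop)
    (hco : IsGoodColOrient (AuxGraph G) (IsOutV G) col orient) :
    ∃ c : V → Bool, IsTCPM G c := by
  exact ⟨_, stmt_16_general G col hco.1.dichromaticIsMatching
    (fun x => hco.exists_adj_ne (AuxGraph.hasDeg3_orig (hcubic x)))
    (fun h => hco.exists_adj_ne (AuxGraph.hasDeg3_dvert h))⟩
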